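/- In the Coxeter group of type A_n, the number of distinct labels iota in N^n for which there exists at least one uniquely labelled geodesic with label iota (including the zero label of the empty word) equals (n^4 - 2n^3 + 17n^2 - 4n + 12)/12. -/

import Mathlib

/-- The Coxeter system of type `Aₙ` (with `n` generators, indexed by `Fin n`). -/
noncomputable def csA (n : ℕ) :
    CoxeterSystem (CoxeterMatrix.Aₙ n) (CoxeterMatrix.Aₙ n).Group :=
  (CoxeterMatrix.Aₙ n).toCoxeterSystem

/-- A word `ω` in the generators of the Coxeter group of type `Aₙ` is a
uniquely labelled geodesic (u.l.g.) if it is reduced and every reduced word with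
the same product and the same label (number of occurrences of each letter) equals `ω`. -/
def IsULGA (n : ℕ) (ω : List (Fin n)) : Prop :=
  (csA n).IsReduced ω ∧
    ∀ ω' : List (Fin n), (csA n).IsReduced ω' →
      (csA n).wordProd ω' = (csA n).wordProd ω →
      (∀ i : Fin n, ω'.count i = ω.count i) → ω' = ω

set_option linter.deprecated false

section Helpers

open Equiv

/-- The permutation of `ℤ` obtained by letting the letter `i` act as the transposition of
`i` and `i + 1`. -/
def permWord (ω : List ℤ) : Perm ℤ := (ω.map fun i => swap i (i + 1)).prod

lemma permWord_cons (i : ℤ) (ω : List ℤ) :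
    permWord (i :: ω) = swap i (i + 1) * permWord ω := by
  simp [permWord]

lemma permWord_append (ω η : List ℤ) : permWord (ω ++ η) = permWord ω * permWord η := by
  simp [permWord]

lemma permWord_cons_inv_apply (i : ℤ) (ω : List ℤ) (x : ℤ) :
    (permWord (i :: ω))⁻¹ x = (permWord ω)⁻¹ (swap i (i + 1) x) := by
  simp [permWord_cons]

/-- The set of inversions of a permutation of `ℤ`. -/
def inversions (π : Perm ℤ) : Set (ℤ × ℤ) := {q | q.1 < q.2 ∧ π q.2 < π q.1}

lemma inversions_swap_mul_subset (π : Perm ℤ) (j : ℤ) :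
    inversions (swap j (j + 1) * π) ⊆ insert (π⁻¹ j, π⁻¹ (j + 1)) (inversions π) := by
  rintro ⟨x, y⟩ ⟨hxy, h⟩
  have hne : π x ≠ π y := fun e => hxy.ne (π.injective e)
  simp only [Perm.mul_apply, swap_apply_def] at h
  rw [Set.mem_insert_iff]
  by_cases hlt : π y < π x
  · exact Or.inr ⟨hxy, hlt⟩
  · have hx : π x = j := by grind
    have hy : π y = j + 1 := by grind
    left
    exact Prod.ext (Perm.eq_inv_iff_eq.2 hx) (Perm.eq_inv_iff_eq.2 hy)

lemma insert_inversions_subset (π : Perm ℤ) (j : ℤ) (h : π⁻¹ j < π⁻¹ (j + 1)) :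
    insert (π⁻¹ j, π⁻¹ (j + 1)) (inversions π) ⊆ inversions (swap j (j + 1) * π) := by
  rintro ⟨x, y⟩ hq
  rcases hq with hq | ⟨hxy, hq⟩
  · obtain ⟨rfl, rfl⟩ := Prod.ext_iff.1 hq
    exact ⟨h, by simp⟩
  · refine ⟨hxy, ?_⟩
    dsimp only at hxy hq
    have : ¬ (π y = j ∧ π x = j + 1) := by
      rintro ⟨hy, hx⟩
      rw [← Perm.eq_inv_iff_eq.2 hx, ← Perm.eq_inv_iff_eq.2 hy] at h
      omega
    simp only [Perm.mul_apply, swap_apply_def]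
    grind

lemma inversions_permWord_nil : inversions (permWord []) = ∅ := by
  ext ⟨x, y⟩
  simp only [inversions, permWord, List.map_nil, List.prod_nil, Perm.coe_one, id_eq,
    Set.mem_ofPred_eq, Set.mem_empty_iff_false, iff_false, not_and, not_lt]
  exact le_of_lt

lemma inversions_permWord_finite (ω : List ℤ) : (inversions (permWord ω)).Finite := by
  induction ω with
  | nil => simp [inversions_permWord_nil]
  | cons i ω ih =>
    rw [permWord_cons]
    exact (ih.insert _).subset (inversions_swap_mul_subset _ _)

lemma ncard_inversions_le_length (ω : List ℤ) :
    (inversions (permWord ω)).ncard ≤ ω.length := by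
  induction ω with
  | nil => simp [inversions_permWord_nil]
  | cons i ω ih =>
    rw [permWord_cons, List.length_cons]
    refine (Set.ncard_le_ncard (inversions_swap_mul_subset _ _)
      ((inversions_permWord_finite ω).insert _)).trans ((Set.ncard_insert_le _ _).trans ?_)
    omega

lemma ncard_inversions_cons (i : ℤ) (ω : List ℤ)
    (h : (permWord (i :: ω))⁻¹ (i + 1) < (permWord (i :: ω))⁻¹ i) :
    (inversions (permWord (i :: ω))).ncard = (inversions (permWord ω)).ncard + 1 := by
  simp only [permWord_cons_inv_apply, swap_apply_left, swap_apply_right] at h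
  rw [permWord_cons, (inversions_swap_mul_subset _ _).antisymm (insert_inversions_subset _ _ h),
    Set.ncard_insert_of_notMem _ (inversions_permWord_finite ω)]
  rintro ⟨-, hlt⟩
  simp at hlt

/-- A letter of a word with minimal length is a descent when it comes first. -/
lemma descent_of_ncard_inversions (j : ℤ) (η : List ℤ)
    (h : (inversions (permWord (j :: η))).ncard = (j :: η).length) :
    (permWord (j :: η))⁻¹ (j + 1) < (permWord (j :: η))⁻¹ j := by
  by_contra hlt
  have hne : (permWord (j :: η))⁻¹ (j + 1) ≠ (permWord (j :: η))⁻¹ j := fun e => by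
    have := (permWord (j :: η))⁻¹.injective e
    omega
  have hη : swap j (j + 1) * permWord (j :: η) = permWord η := by
    rw [permWord_cons, swap_mul_self_mul]
  have hsub := insert_inversions_subset (permWord (j :: η)) j (by omega)
  rw [hη] at hsub
  have h1 := Set.ncard_le_ncard ((Set.subset_insert _ _).trans hsub)
    (inversions_permWord_finite η)
  have h2 := ncard_inversions_le_length η
  rw [List.length_cons] at h
  omega

lemma permWord_inv_le_iff (η : List ℤ) (j : ℤ) (hj : j ∉ η) (x : ℤ) :
    (permWord η)⁻¹ x ≤ j ↔ x ≤ j := by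
  induction η generalizing x with
  | nil => simp [permWord]
  | cons i η ih =>
    rw [List.mem_cons, not_or] at hj
    rw [permWord_cons_inv_apply, ih hj.2, swap_apply_def]
    grind

/-- A word on `ℤ` is rigid if it is of minimal length and is determined by its permutation
together with the multiset of its letters. -/
def IsRigid (ω : List ℤ) : Prop :=
  (inversions (permWord ω)).ncard = ω.length ∧
    ∀ η : List ℤ, η.Perm ω → permWord η = permWord ω → η = ω

lemma IsRigid.nil : IsRigid [] :=
  ⟨by simp [inversions_permWord_nil], fun _ h _ => h.eq_nil⟩

lemma IsRigid.cons {i : ℤ} {ω : List ℤ} (hω : IsRigid ω)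
    (hi : (permWord (i :: ω))⁻¹ (i + 1) < (permWord (i :: ω))⁻¹ i)
    (hd : ∀ j ∈ ω, j ≠ i → (permWord (i :: ω))⁻¹ (j + 1) < (permWord (i :: ω))⁻¹ j →
      ω.count j = 1 ∧ ((permWord (i :: ω))⁻¹ j ≤ j ∨ j < (permWord (i :: ω))⁻¹ (j + 1))) :
    IsRigid (i :: ω) := by
  have hcard : (inversions (permWord (i :: ω))).ncard = (i :: ω).length := by
    rw [ncard_inversions_cons i ω hi, hω.1, List.length_cons]
  refine ⟨hcard, fun η hη hπ => ?_⟩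
  cases η with
  | nil => simpa using hη.length_eq
  | cons j η =>
    by_cases hji : j = i
    · subst hji
      rw [hω.2 η ((List.perm_cons j).1 hη)]
      simpa [permWord_cons] using hπ
    · exfalso
      have hmem : j ∈ ω := by
        have : j ∈ i :: ω := hη.subset List.mem_cons_self
        simpa [hji] using this
      have hdesc := descent_of_ncard_inversions j η (by rw [hπ, hcard, hη.length_eq])
      rw [hπ] at hdesc
      obtain ⟨hc, hor⟩ := hd j hmem hji hdesc
      have hnot : j ∉ η := by
        have := hη.count_eq j
        rw [List.count_cons_self, List.count_cons_of_ne (Ne.symm hji), hc] at this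
        rw [← List.count_eq_zero]
        omega
      rw [← hπ, permWord_cons_inv_apply, permWord_cons_inv_apply, swap_apply_left,
        swap_apply_right, permWord_inv_le_iff η j hnot] at hor
      have := (permWord_inv_le_iff η j hnot j).2 le_rfl
      omega

/-- The word `p, p + ε, p + 2 * ε, …` with `k` letters. -/
def seg (ε p : ℤ) : ℕ → List ℤ
  | 0 => []
  | k + 1 => p :: seg ε (p + ε) k

lemma seg_add (ε p : ℤ) (k l : ℕ) : seg ε p (k + l) = seg ε p k ++ seg ε (p + ε * k) l := by
  induction k generalizing p with
  | zero => simp [seg]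
  | succ k ih =>
    rw [Nat.add_right_comm, seg, seg, ih, List.cons_append]
    push_cast
    congr 3
    ring

lemma count_seg_one (p : ℤ) (k : ℕ) (x : ℤ) :
    (seg 1 p k).count x = if p ≤ x ∧ x < p + k then 1 else 0 := by
  induction k generalizing p with
  | zero => simp [seg]
  | succ k ih =>
    rw [seg, List.count_cons, ih]
    grind

lemma count_seg_neg_one (p : ℤ) (k : ℕ) (x : ℤ) :
    (seg (-1) p k).count x = if p - k < x ∧ x ≤ p then 1 else 0 := by
  induction k generalizing p with
  | zero => simp [seg]
  | succ k ih =>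
    rw [seg, List.count_cons, ih]
    grind

lemma permWord_seg_one_inv (p : ℤ) (k : ℕ) (x : ℤ) :
    (permWord (seg 1 p k))⁻¹ x =
      if x = p then p + k else if p < x ∧ x ≤ p + k then x - 1 else x := by
  induction k generalizing p x with
  | zero => simp [seg, permWord]; grind
  | succ k ih =>
    rw [seg, permWord_cons_inv_apply, ih, swap_apply_def]
    grind

lemma permWord_seg_neg_one_inv (p : ℤ) (k : ℕ) (x : ℤ) :
    (permWord (seg (-1) p k))⁻¹ x =
      if x = p + 1 then p + 1 - k else if p - k < x ∧ x ≤ p then x + 1 else x := by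
  induction k generalizing p x with
  | zero => simp [seg, permWord]; grind
  | succ k ih =>
    rw [seg, permWord_cons_inv_apply, ih, swap_apply_def]
    grind

lemma permWord_append_inv_apply (ω η : List ℤ) (x : ℤ) :
    (permWord (ω ++ η))⁻¹ x = (permWord η)⁻¹ ((permWord ω)⁻¹ x) := by
  simp [permWord_append]

lemma isRigid_seg_neg_one (p : ℤ) (k : ℕ) : IsRigid (seg (-1) p k) := by
  induction k generalizing p with
  | zero => exact IsRigid.nil
  | succ k ih =>
    have hg := permWord_seg_neg_one_inv p (k + 1)
    rw [seg] at hg ⊢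
    refine (ih _).cons ?_ ?_
    · rw [hg, hg]
      grind
    · intro j hj hjp
      rw [hg, hg]
      grind

lemma permWord_hill_inv (c : ℤ) (k l : ℕ) (x : ℤ) :
    (permWord (seg 1 c k ++ seg (-1) (c + k) (l + 1)))⁻¹ x =
      if x = c then c + k + 1
      else if c < x ∧ x ≤ c + k then (if c + k - l ≤ x - 1 then x else x - 1)
      else if x = c + k + 1 then c + k - l
      else if c + k - l ≤ x ∧ x < c then x + 1 else x := by
  rw [permWord_append_inv_apply, permWord_seg_one_inv, permWord_seg_neg_one_inv]
  grind

lemma count_hill (c : ℤ) (k l : ℕ) (x : ℤ) :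
    (seg 1 c k ++ seg (-1) (c + k) (l + 1)).count x =
      (if c ≤ x ∧ x < c + k then 1 else 0) + (if c + k - l ≤ x ∧ x ≤ c + k then 1 else 0) := by
  rw [List.count_append, count_seg_one, count_seg_neg_one]
  grind

lemma isRigid_hill (c : ℤ) (k l : ℕ) :
    IsRigid (seg 1 c k ++ seg (-1) (c + k) (l + 1)) := by
  induction k generalizing c with
  | zero => exact isRigid_seg_neg_one _ _
  | succ k ih =>
    have hg := permWord_hill_inv c (k + 1) l
    have hr := ih (c + 1)
    have hc := count_hill (c + 1) k l
    have he : c + 1 + (k : ℤ) = c + (k + 1 : ℕ) := by push_cast; ring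
    rw [he] at hr hc
    rw [seg, List.cons_append] at hg ⊢
    refine hr.cons ?_ ?_
    · rw [hg, hg]
      grind
    · intro j hj hjp
      rw [hg, hg, hc]
      rw [← List.count_pos_iff, hc] at hj
      grind

lemma count_zigzag (c : ℤ) (i m j : ℕ) (x : ℤ) :
    (seg (-1) (c + i) i ++ (seg 1 c m ++ seg (-1) (c + m) (j + 1))).count x =
      (if c < x ∧ x ≤ c + i then 1 else 0) + ((if c ≤ x ∧ x < c + m then 1 else 0) +
        (if c + m - j ≤ x ∧ x ≤ c + m then 1 else 0)) := by
  rw [List.count_append, count_hill, count_seg_neg_one]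
  grind

lemma isRigid_zigzag (c : ℤ) (i m j : ℕ)
    (h : i = 0 ∨ (i < m ∧ j < m) ∨ (i ≤ m ∧ j = 0)) :
    IsRigid (seg (-1) (c + i) i ++ (seg 1 c m ++ seg (-1) (c + m) (j + 1))) := by
  induction i with
  | zero => exact isRigid_hill c m j
  | succ i ih =>
    have hg : ∀ x, _ := fun x => permWord_append_inv_apply (seg (-1) (c + (i + 1 : ℕ)) (i + 1))
      (seg 1 c m ++ seg (-1) (c + m) (j + 1)) x
    have hc := count_zigzag c i m j
    have hr := ih (by omega)
    have he : c + (i : ℤ) = c + (i + 1 : ℕ) + -1 := by push_cast; ring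
    simp only [permWord_hill_inv, permWord_seg_neg_one_inv] at hg
    rw [he] at hr hc
    rw [seg, List.cons_append] at hg ⊢
    refine hr.cons ?_ ?_
    · rw [hg, hg]
      grind
    · intro x hx hxp
      rw [hg, hg, hc]
      rw [← List.count_pos_iff, hc] at hx
      clear hg hc hr he ih
      grind

lemma swap_mul_swap_pow_three (a b c : ℤ) (hab : a ≠ b) (hbc : b ≠ c) (hac : a ≠ c) :
    (swap a b * swap b c) ^ 3 = 1 := by
  ext x
  simp only [pow_succ, pow_zero, one_mul, Perm.mul_apply, swap_apply_def, Perm.coe_one, id_eq]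
  grind

lemma swap_mul_swap_sq (a b c d : ℤ) (hac : a ≠ c) (had : a ≠ d) (hbc : b ≠ c) (hbd : b ≠ d) :
    (swap a b * swap c d) ^ 2 = 1 := by
  ext x
  simp only [pow_succ, pow_zero, one_mul, Perm.mul_apply, swap_apply_def, Perm.coe_one, id_eq]
  grind

lemma Aₙ_apply (n : ℕ) (i j : Fin n) : CoxeterMatrix.Aₙ n i j =
    if i = j then 1 else if (j : ℕ) + 1 = i ∨ (i : ℕ) + 1 = j then 3 else 2 := rfl

lemma isLiftable_swap (n : ℕ) : (CoxeterMatrix.Aₙ n).IsLiftable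
    (fun i : Fin n => swap ((i : ℕ) : ℤ) ((i : ℕ) + 1)) := by
  intro i j
  rw [Aₙ_apply]
  split_ifs with h1 h2
  · subst h1
    simp
  · rcases h2 with h2 | h2
    · dsimp only
      rw [← h2, swap_comm ((j : ℕ) : ℤ), swap_comm _ (((j : ℕ) + 1 : ℕ) + 1 : ℤ)]
      push_cast
      apply swap_mul_swap_pow_three <;> omega
    · dsimp only
      rw [← h2]
      push_cast
      apply swap_mul_swap_pow_three <;> omega
  · have : (i : ℕ) ≠ j := fun e => h1 (Fin.ext e)
    apply swap_mul_swap_sq <;> omega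

/-- A word in the generators, with its letters read as integers. -/
def toIntWord {n : ℕ} (ω : List (Fin n)) : List ℤ := ω.map fun i : Fin n => ((i : ℕ) : ℤ)

lemma natCast_val_injective (n : ℕ) : Function.Injective fun i : Fin n => ((i : ℕ) : ℤ) :=
  Nat.cast_injective.comp Fin.val_injective

lemma permWord_toIntWord {n : ℕ} (ω : List (Fin n)) :
    permWord (toIntWord ω) = (csA n).lift ⟨_, isLiftable_swap n⟩ ((csA n).wordProd ω) := by
  induction ω with
  | nil => simp [permWord, toIntWord]
  | cons i ω ih =>
    rw [CoxeterSystem.wordProd_cons, map_mul, ← ih, CoxeterSystem.lift_apply_simple,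
      ← permWord_cons]
    rfl

lemma IsRigid.isULGA {n : ℕ} {ω : List (Fin n)} (h : IsRigid (toIntWord ω)) : IsULGA n ω := by
  refine ⟨?_, fun η _ hprod hcount => ?_⟩
  · obtain ⟨η, hη, hprod⟩ := (csA n).exists_isReduced ((csA n).wordProd ω)
    have h1 := ncard_inversions_le_length (toIntWord η)
    rw [permWord_toIntWord, ← hprod, ← permWord_toIntWord, h.1] at h1
    simp only [toIntWord, List.length_map] at h1
    refine le_antisymm ((csA n).length_wordProd_le ω) ?_
    rwa [hprod, hη.eq]
  · refine (natCast_val_injective n).list_map (h.2 (toIntWord η) ?_ ?_)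
    · exact (List.perm_iff_count.2 hcount).map _
    · rw [permWord_toIntWord, permWord_toIntWord, hprod]

lemma simple_mul_simple_comm {n : ℕ} {i j : Fin n} (h : (i : ℕ) + 1 < j ∨ (j : ℕ) + 1 < i) :
    Commute ((csA n).simple i) ((csA n).simple j) := by
  have hM : CoxeterMatrix.Aₙ n i j = 2 := by
    rw [Aₙ_apply, if_neg (by rintro rfl; omega), if_neg (by omega)]
  have := (csA n).simple_mul_simple_pow i j
  rw [hM, pow_two, mul_eq_one_iff_eq_inv] at this
  rw [Commute, SemiconjBy, this, mul_inv_rev, CoxeterSystem.inv_simple, CoxeterSystem.inv_simple]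

lemma simple_braid {n : ℕ} {i j : Fin n} (h : (i : ℕ) + 1 = j ∨ (j : ℕ) + 1 = i) :
    (csA n).simple i * (csA n).simple j * (csA n).simple i =
      (csA n).simple j * (csA n).simple i * (csA n).simple j := by
  have hM : CoxeterMatrix.Aₙ n i j = 3 := by
    rw [Aₙ_apply, if_neg (by rintro rfl; omega), if_pos (by omega)]
  have h3 := (csA n).simple_mul_simple_pow i j
  rw [hM] at h3
  have := eq_inv_of_mul_eq_one_left
    (a := (csA n).simple i * (csA n).simple j * (csA n).simple i)
    (b := (csA n).simple j * (csA n).simple i * (csA n).simple j)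
    (Eq.trans (by simp only [pow_succ, pow_zero, one_mul, mul_assoc]) h3)
  simpa [mul_assoc] using this

lemma IsULGA.of_cons {n : ℕ} {i : Fin n} {ω : List (Fin n)} (h : IsULGA n (i :: ω)) :
    IsULGA n ω := by
  have hred : (csA n).IsReduced ω := by simpa using h.1.drop 1
  refine ⟨hred, fun η hη hprod hcount => ?_⟩
  have hprod' : (csA n).wordProd (i :: η) = (csA n).wordProd (i :: ω) := by
    rw [CoxeterSystem.wordProd_cons, CoxeterSystem.wordProd_cons, hprod]
  have hlen : η.length = ω.length := by rw [← hη.eq, ← hred.eq, hprod]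
  refine List.cons_injective (h.2 (i :: η) ?_ hprod' fun j => ?_)
  · rw [CoxeterSystem.IsReduced, hprod', h.1.eq, List.length_cons, List.length_cons, hlen]
  · rw [List.count_cons, List.count_cons, hcount]

/-- A u.l.g. is the only rearrangement of itself with the same product. -/
lemma IsULGA.eq_of_perm {n : ℕ} {ω η : List (Fin n)} (h : IsULGA n ω) (hp : η.Perm ω)
    (hprod : (csA n).wordProd η = (csA n).wordProd ω) : η = ω :=
  h.2 η (by rw [CoxeterSystem.IsReduced, hprod, h.1.eq, hp.length_eq]) hprod hp.count_eq

lemma IsULGA.ne_of_cons_cons {n : ℕ} {i j : Fin n} {v : List (Fin n)}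
    (h : IsULGA n (i :: j :: v)) : i ≠ j := by
  rintro rfl
  have h1 := h.1.eq
  rw [CoxeterSystem.wordProd_cons, CoxeterSystem.wordProd_cons,
    CoxeterSystem.simple_mul_simple_cancel_left] at h1
  have := (csA n).length_wordProd_le v
  simp only [List.length_cons] at h1
  omega

lemma IsULGA.adjacent {n : ℕ} {i j : Fin n} {v : List (Fin n)}
    (h : IsULGA n (i :: j :: v)) : (i : ℕ) + 1 = j ∨ (j : ℕ) + 1 = i := by
  have hne := h.ne_of_cons_cons
  have hne' : (i : ℕ) ≠ j := fun e => hne (Fin.ext e)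
  by_contra hadj
  have := h.eq_of_perm (List.Perm.swap i j v) (by
    simp only [CoxeterSystem.wordProd_cons, ← mul_assoc,
      (simple_mul_simple_comm (i := i) (j := j) (by omega)).eq])
  exact hne (List.cons_eq_cons.1 this).1.symm

lemma wordProd_commute {n : ℕ} {i : Fin n} {X : List (Fin n)}
    (hX : ∀ z ∈ X, (i : ℕ) + 1 < z ∨ (z : ℕ) + 1 < i) :
    Commute ((csA n).simple i) ((csA n).wordProd X) := by
  induction X with
  | nil => simp
  | cons z X ih =>
    rw [CoxeterSystem.wordProd_cons]
    exact (simple_mul_simple_comm (hX z (by simp))).mul_right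
      (ih fun y hy => hX y (by simp [hy]))

lemma mul_palindrome {G : Type*} [Group G] {x y X : G} (hxy : x * y * x = y * x * y)
    (hX : Commute x X) : x * y * X * y * x * y = y * x * y * X * y * x := by
  calc x * y * X * y * x * y = x * y * X * (y * x * y) := by group
    _ = x * y * (x * X) * y * x := by rw [← hxy, hX.eq]; group
    _ = x * y * x * X * y * x := by group
    _ = y * x * y * X * y * x := by rw [hxy]

lemma wordProd_palindrome {n : ℕ} {x y : Fin n} {X : List (Fin n)} (v : List (Fin n))
    (hxy : (x : ℕ) + 1 = y ∨ (y : ℕ) + 1 = x)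
    (hX : ∀ z ∈ X, (x : ℕ) + 1 < z ∨ (z : ℕ) + 1 < x) :
    (csA n).wordProd (x :: y :: (X ++ y :: x :: y :: v)) =
      (csA n).wordProd (y :: x :: y :: (X ++ y :: x :: v)) := by
  have := mul_palindrome (simple_braid hxy) (wordProd_commute hX)
  simp only [CoxeterSystem.wordProd_cons, CoxeterSystem.wordProd_append, ← mul_assoc]
  rw [this]

lemma perm_palindrome {α : Type*} (x y : α) (X v : List α) :
    (x :: y :: (X ++ y :: x :: y :: v)).Perm (y :: x :: y :: (X ++ y :: x :: v)) := by
  classical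
  rw [List.perm_iff_count]
  intro a
  simp only [List.count_cons, List.count_append]
  ring

lemma not_isULGA_palindrome_append {n : ℕ} {x y : Fin n} {X v : List (Fin n)}
    (hX : ∀ z ∈ X, (x : ℕ) + 1 < z ∨ (z : ℕ) + 1 < x) :
    ¬ IsULGA n (x :: y :: (X ++ y :: x :: y :: v)) := fun h =>
  h.ne_of_cons_cons (List.cons_eq_cons.1 (h.eq_of_perm (perm_palindrome x y X v).symm
    (wordProd_palindrome v h.adjacent hX).symm)).1.symm

lemma not_isULGA_cons_palindrome {n : ℕ} {x y : Fin n} {X v : List (Fin n)}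
    (hX : ∀ z ∈ X, (x : ℕ) + 1 < z ∨ (z : ℕ) + 1 < x) :
    ¬ IsULGA n (y :: x :: y :: (X ++ y :: x :: v)) := fun h =>
  h.ne_of_cons_cons (List.cons_eq_cons.1 (h.eq_of_perm (perm_palindrome x y X v)
    (wordProd_palindrome v h.adjacent.symm hX))).1.symm

lemma not_isULGA_alternating {n : ℕ} {x y : Fin n} {v : List (Fin n)} :
    ¬ IsULGA n (x :: y :: x :: y :: v) := by
  intro h
  have h1 := h.1.eq
  have hb := simple_braid h.adjacent
  have : (csA n).wordProd (x :: y :: x :: y :: v) = (csA n).wordProd (y :: x :: v) := by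
    simp only [CoxeterSystem.wordProd_cons, ← mul_assoc]
    rw [hb]
    simp
  rw [this] at h1
  have := (csA n).length_wordProd_le (y :: x :: v)
  simp only [List.length_cons] at h1 this
  omega

lemma toIntWord_eq_cons {n : ℕ} {ω : List (Fin n)} {x : ℤ} {v : List ℤ}
    (h : toIntWord ω = x :: v) : ∃ i η, ω = i :: η ∧ ((i : ℕ) : ℤ) = x ∧ toIntWord η = v :=
  List.map_eq_cons_iff.1 h

lemma toIntWord_eq_append {n : ℕ} {ω : List (Fin n)} {u v : List ℤ}
    (h : toIntWord ω = u ++ v) : ∃ η ξ, ω = η ++ ξ ∧ toIntWord η = u ∧ toIntWord ξ = v :=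
  List.map_eq_append_iff.1 h

/-- The word `x, x - ε, …, x - k * ε, …, x - ε, x`. -/
def palindrome (ε x : ℤ) (k : ℕ) : List ℤ := seg (-ε) x k ++ seg ε (x - ε * k) (k + 1)

lemma palindrome_succ (ε x : ℤ) (k : ℕ) :
    palindrome ε x (k + 1) = x :: (palindrome ε (x - ε) k ++ [x]) := by
  have h1 : x - ε * (k + 1 : ℕ) = x - ε - ε * k := by push_cast; ring
  have h2 : x - ε - ε * k + ε * (k + 1 : ℕ) = x := by push_cast; ring
  rw [palindrome, h1, seg, seg_add ε _ (k + 1) 1, h2, palindrome, ← sub_eq_add_neg,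
    List.cons_append, ← List.append_assoc]
  rfl

lemma mem_seg {ε p : ℤ} {k : ℕ} {z : ℤ} (h : z ∈ seg ε p k) : ∃ t : ℕ, t < k ∧ z = p + ε * t := by
  induction k generalizing p with
  | zero => simp [seg] at h
  | succ k ih =>
    rcases List.mem_cons.1 h with rfl | h
    · exact ⟨0, by omega, by simp⟩
    · obtain ⟨t, ht, rfl⟩ := ih h
      exact ⟨t + 1, by omega, by push_cast; ring⟩

lemma mem_palindrome {ε x : ℤ} {k : ℕ} {z : ℤ} (h : z ∈ palindrome ε x k) :
    ∃ t : ℕ, z = x - ε * t := by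
  rcases List.mem_append.1 h with h | h
  · obtain ⟨t, -, rfl⟩ := mem_seg h
    exact ⟨t, by ring⟩
  · obtain ⟨t, ht, rfl⟩ := mem_seg h
    exact ⟨k - t, by rw [Nat.cast_sub (by omega)]; ring⟩

lemma not_isULGA_of_palindrome_append {n : ℕ} {ω : List (Fin n)} {ε x : ℤ} {k : ℕ} {v : List ℤ}
    (hε : ε = 1 ∨ ε = -1) (hω : toIntWord ω = palindrome ε x (k + 1) ++ (x - ε) :: v) :
    ¬ IsULGA n ω := by
  cases k with
  | zero =>
    rw [palindrome_succ] at hω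
    simp only [palindrome, seg, List.nil_append, List.cons_append] at hω
    obtain ⟨i, _, rfl, hi, hω⟩ := toIntWord_eq_cons hω
    obtain ⟨j, _, rfl, hj, hω⟩ := toIntWord_eq_cons hω
    obtain ⟨i', _, rfl, hi', hω⟩ := toIntWord_eq_cons hω
    obtain ⟨j', _, rfl, hj', hω⟩ := toIntWord_eq_cons hω
    obtain rfl : i' = i := Fin.ext (by omega)
    obtain rfl : j' = j := Fin.ext (by push_cast at hj; omega)
    exact not_isULGA_alternating
  | succ k =>
    rw [palindrome_succ, palindrome_succ] at hω
    simp only [List.nil_append, List.cons_append, List.append_assoc] at hω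
    obtain ⟨i, _, rfl, hi, hω⟩ := toIntWord_eq_cons hω
    obtain ⟨j, _, rfl, hj, hω⟩ := toIntWord_eq_cons hω
    obtain ⟨X, _, rfl, hX, hω⟩ := toIntWord_eq_append hω
    obtain ⟨j', _, rfl, hj', hω⟩ := toIntWord_eq_cons hω
    obtain ⟨i', _, rfl, hi', hω⟩ := toIntWord_eq_cons hω
    obtain ⟨j'', _, rfl, hj'', hω⟩ := toIntWord_eq_cons hω
    obtain rfl : i' = i := Fin.ext (by omega)
    obtain rfl : j' = j := Fin.ext (by omega)
    obtain rfl : j'' = j' := Fin.ext (by omega)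
    refine not_isULGA_palindrome_append fun z hz => ?_
    have hz' : ((z : ℕ) : ℤ) ∈ palindrome ε (x - ε - ε) k :=
      hX ▸ List.mem_map_of_mem hz
    obtain ⟨t, ht⟩ := mem_palindrome hz'
    rcases hε with rfl | rfl <;> omega

lemma not_isULGA_of_cons_palindrome {n : ℕ} {ω : List (Fin n)} {ε x : ℤ} {k : ℕ} {v : List ℤ}
    (hε : ε = 1 ∨ ε = -1) (hω : toIntWord ω = (x - ε) :: (palindrome ε x (k + 1) ++ v)) :
    ¬ IsULGA n ω := by
  cases k with
  | zero =>
    rw [palindrome_succ] at hω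
    simp only [palindrome, seg, List.nil_append, List.cons_append] at hω
    obtain ⟨i, _, rfl, hi, hω⟩ := toIntWord_eq_cons hω
    obtain ⟨j, _, rfl, hj, hω⟩ := toIntWord_eq_cons hω
    obtain ⟨i', _, rfl, hi', hω⟩ := toIntWord_eq_cons hω
    obtain ⟨j', _, rfl, hj', hω⟩ := toIntWord_eq_cons hω
    obtain rfl : i' = i := Fin.ext (by push_cast at hi'; omega)
    obtain rfl : j' = j := Fin.ext (by omega)
    exact not_isULGA_alternating
  | succ k =>
    rw [palindrome_succ, palindrome_succ] at hω
    simp only [List.nil_append, List.cons_append, List.append_assoc] at hω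
    obtain ⟨j, _, rfl, hj, hω⟩ := toIntWord_eq_cons hω
    obtain ⟨i, _, rfl, hi, hω⟩ := toIntWord_eq_cons hω
    obtain ⟨j', _, rfl, hj', hω⟩ := toIntWord_eq_cons hω
    obtain ⟨X, _, rfl, hX, hω⟩ := toIntWord_eq_append hω
    obtain ⟨j'', _, rfl, hj'', hω⟩ := toIntWord_eq_cons hω
    obtain ⟨i', _, rfl, hi', hω⟩ := toIntWord_eq_cons hω
    obtain rfl : i' = i := Fin.ext (by omega)
    obtain rfl : j' = j := Fin.ext (by omega)
    obtain rfl : j'' = j' := Fin.ext (by omega)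
    refine not_isULGA_cons_palindrome fun z hz => ?_
    have hz' : ((z : ℕ) : ℤ) ∈ palindrome ε (x - ε - ε) k :=
      hX ▸ List.mem_map_of_mem hz
    obtain ⟨t, ht⟩ := mem_palindrome hz'
    rcases hε with rfl | rfl <;> omega

/-- The walk on `ℤ` that starts at `c + i * ε`, turns at `c` and `c + m * ε` and ends at
`c + (m - j) * ε`. -/
def zigzag (ε c : ℤ) (i m j : ℕ) : List ℤ :=
  seg (-ε) (c + ε * i) i ++ (seg ε c m ++ seg (-ε) (c + ε * m) (j + 1))

lemma zigzag_left_succ (ε c : ℤ) (i m j : ℕ) :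
    zigzag ε c (i + 1) m j = (c + ε * (i + 1 : ℕ)) :: zigzag ε c i m j := by
  have h : c + ε * (i + 1 : ℕ) + -ε = c + ε * i := by push_cast; ring
  rw [zigzag, seg, h, List.cons_append, zigzag]

lemma zigzag_mid_succ (ε c : ℤ) (m j : ℕ) :
    zigzag ε c 0 (m + 1) j = c :: zigzag ε (c + ε) 0 m j := by
  have h : c + ε * (m + 1 : ℕ) = c + ε + ε * m := by push_cast; ring
  rw [zigzag, seg, zigzag, h]
  rfl

lemma zigzag_mid_zero (ε c : ℤ) (i j : ℕ) :
    zigzag ε c i 0 j = zigzag ε (c - ε * j) (i + j) 0 0 := by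
  have h1 : c - ε * j + ε * (i + j : ℕ) = c + ε * i := by push_cast; ring
  have h2 : c + ε * i + -ε * i = c + ε * (0 : ℕ) := by push_cast; ring
  have h3 : c + ε * (0 : ℕ) + -ε * j = c - ε * j + ε * (0 : ℕ) := by push_cast; ring
  rw [zigzag, zigzag, h1, seg_add _ _ i j, h2, seg_add _ _ j 1, h3, List.append_assoc]
  simp [seg]

/-- The zigzag walks with at most one turn, and those with two turns whose middle part is the
longest. -/
def IsLongMid (i m j : ℕ) : Prop := i = 0 ∨ j = 0 ∨ (i < m ∧ j < m)

lemma zigzag_neg (ε c : ℤ) (i m : ℕ) :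
    zigzag (-ε) (c + ε * (i + 1 : ℕ)) 1 (i + 1) m =
      (c + ε * i) :: zigzag ε c (i + 1) m 0 := by
  have h1 : c + ε * (i + 1 : ℕ) + -ε * (1 : ℕ) = c + ε * i := by push_cast; ring
  have h2 : c + ε * (i + 1 : ℕ) + -ε * (i + 1 : ℕ) = c := by push_cast; ring
  rw [zigzag, zigzag, h1, h2, seg_add _ _ m 1]
  simp [seg]

lemma zigzag_eq_palindrome_append (ε c : ℤ) (i j : ℕ) : ∃ v,
    zigzag ε c i i (j + 1) =
      palindrome ε (c + ε * i) i ++ (c + ε * i - ε) :: v := by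
  have h : c + ε * i - ε * i = c := by ring
  refine ⟨seg (-ε) (c + ε * i + -ε + -ε) j, ?_⟩
  rw [zigzag, palindrome, h, seg_add ε c i 1]
  simp [seg, sub_eq_add_neg]

lemma zigzag_one_eq_cons_palindrome (ε c : ℤ) (m j : ℕ) (h : m ≤ j) : ∃ v,
    zigzag ε c 1 m j = (c - -ε) :: (palindrome (-ε) c m ++ v) := by
  obtain ⟨k, rfl⟩ := Nat.exists_eq_add_of_le h
  refine ⟨seg (-ε) (c + ε * m + -ε * (m + 1 : ℕ)) k, ?_⟩
  rw [zigzag, palindrome, Nat.add_right_comm, seg_add (-ε) _ (m + 1) k]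
  simp [seg]

lemma cons_zigzag_eq_cons_palindrome (ε c : ℤ) (i m j : ℕ) (h : i ≤ m) : ∃ v,
    (c + ε * i - ε) :: zigzag ε c i m j =
      (c + ε * i - ε) :: (palindrome ε (c + ε * i) i ++ v) := by
  have hc : c + ε * i - ε * i = c := by ring
  obtain ⟨k, rfl⟩ := Nat.exists_eq_add_of_le h
  rw [zigzag, palindrome, hc]
  cases k with
  | zero =>
    refine ⟨seg (-ε) (c + ε * i + -ε) j, ?_⟩
    rw [seg_add ε c i 1]
    simp [seg]
  | succ k =>
    refine ⟨seg ε (c + ε * (i + 1 : ℕ)) k ++ seg (-ε) (c + ε * (i + (k + 1) : ℕ)) (j + 1), ?_⟩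
    rw [add_comm k 1, ← add_assoc, seg_add ε c (i + 1) k]
    simp

lemma zigzag_eq_cons (ε c : ℤ) (i m j : ℕ) : ∃ v, zigzag ε c i m j = (c + ε * i) :: v := by
  cases i with
  | succ i => exact ⟨_, zigzag_left_succ ε c i m j⟩
  | zero =>
    cases m with
    | succ m => exact ⟨zigzag ε (c + ε) 0 m j, by simp [zigzag_mid_succ]⟩
    | zero => exact ⟨seg (-ε) (c + -ε) j, by simp [zigzag, seg]⟩

/-- Every nonempty u.l.g. is a zigzag walk. -/
lemma IsULGA.exists_zigzag {n : ℕ} {ω : List (Fin n)} (h : IsULGA n ω) (hne : ω ≠ []) :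
    ∃ (ε c : ℤ) (i m j : ℕ), (ε = 1 ∨ ε = -1) ∧ IsLongMid i m j ∧
      toIntWord ω = zigzag ε c i m j := by
  induction ω with
  | nil => exact absurd rfl hne
  | cons x ω ih =>
    cases ω with
    | nil => exact ⟨1, x, 0, 0, 0, Or.inl rfl, Or.inl rfl, by simp [toIntWord, zigzag, seg]⟩
    | cons y η =>
      have hadj := h.adjacent
      have hred : ∃ (ε c : ℤ) (i m j : ℕ), (ε = 1 ∨ ε = -1) ∧ IsLongMid i m j ∧
          (0 < m ∨ j = 0) ∧ toIntWord (y :: η) = zigzag ε c i m j := by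
        obtain ⟨ε, c, i, m, j, hε, hmid, hz⟩ := ih h.of_cons (List.cons_ne_nil _ _)
        rcases Nat.eq_zero_or_pos m with rfl | hm
        · exact ⟨ε, _, _, 0, 0, hε, Or.inr (Or.inl rfl), Or.inr rfl,
            hz.trans (zigzag_mid_zero ε c i j)⟩
        · exact ⟨ε, c, i, m, j, hε, hmid, Or.inl hm, hz⟩
      obtain ⟨ε, c, i, m, j, hε, hmid, hm, hz⟩ := hred
      have hy : ((y : ℕ) : ℤ) = c + ε * i := by
        obtain ⟨v, hv⟩ := zigzag_eq_cons ε c i m j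
        exact (List.cons_eq_cons.1 (hz.trans hv)).1
      have hx : ((x : ℕ) : ℤ) = c + ε * i + ε ∨ ((x : ℕ) : ℤ) = c + ε * i - ε := by
        rw [← hy]
        rcases hε with rfl | rfl <;> omega
      have hω : toIntWord (x :: y :: η) = ((x : ℕ) : ℤ) :: zigzag ε c i m j := by
        rw [← hz]
        rfl
      have hε' : -ε = 1 ∨ -ε = -1 := by omega
      rcases hx with hx | hx
      · have hx' : ((x : ℕ) : ℤ) = c + ε * (i + 1 : ℕ) := by rw [hx]; push_cast; ring
        rw [hx', ← zigzag_left_succ] at hω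
        by_cases hlong : IsLongMid (i + 1) m j
        · exact ⟨ε, c, i + 1, m, j, hε, hlong, hω⟩
        · exfalso
          unfold IsLongMid at hmid hlong
          rcases lt_or_ge j m with hjm | hjm
          · obtain rfl : m = i + 1 := by omega
            obtain ⟨j, rfl⟩ : ∃ k, j = k + 1 := ⟨j - 1, by omega⟩
            obtain ⟨v, hv⟩ := zigzag_eq_palindrome_append ε c (i + 1) j
            exact not_isULGA_of_palindrome_append hε (hω.trans hv) h
          · obtain rfl : i = 0 := by omega
            obtain ⟨m, rfl⟩ : ∃ k, m = k + 1 := ⟨m - 1, by omega⟩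
            obtain ⟨v, hv⟩ := zigzag_one_eq_cons_palindrome ε c (m + 1) j hjm
            exact not_isULGA_of_cons_palindrome hε' (hω.trans hv) h
      · cases i with
        | zero =>
          refine ⟨ε, c - ε, 0, m + 1, j, hε, Or.inl rfl, ?_⟩
          rw [hω, hx, zigzag_mid_succ]
          simp
        | succ i =>
          rw [hx] at hω
          rcases le_or_gt (i + 1) m with him | him
          · obtain ⟨v, hv⟩ := cons_zigzag_eq_cons_palindrome ε c (i + 1) m j him
            exact absurd h (not_isULGA_of_cons_palindrome hε (hω.trans hv))
          · unfold IsLongMid at hmid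
            obtain rfl : j = 0 := by omega
            refine ⟨-ε, c + ε * (i + 1 : ℕ), 1, i + 1, m, hε', by unfold IsLongMid; omega, ?_⟩
            rw [zigzag_neg, hω]
            congr 1
            push_cast
            ring

/-- The label that is `1` on the interval `[c, c + m]`, plus `1` on the `i` points after `c`, plus
`1` on the `j` points before `c + m`. -/
def zigzagLabel (c : ℤ) (m i j : ℕ) (x : ℤ) : ℕ :=
  (if c ≤ x ∧ x ≤ c + m then 1 else 0) + (if c < x ∧ x ≤ c + i then 1 else 0) +
    (if c + m - j ≤ x ∧ x < c + m then 1 else 0)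

lemma count_zigzag_one (c : ℤ) (i m j : ℕ) (x : ℤ) :
    (zigzag 1 c i m j).count x = (if c < x ∧ x ≤ c + i then 1 else 0) +
      ((if c ≤ x ∧ x < c + m then 1 else 0) +
        (if c + m - j ≤ x ∧ x ≤ c + m then 1 else 0)) := by
  simpa [zigzag] using count_zigzag c i m j x

lemma count_zigzag_neg_one (c : ℤ) (i m j : ℕ) (x : ℤ) :
    (zigzag (-1) c i m j).count x = (if c - i ≤ x ∧ x < c then 1 else 0) +
      ((if c - m < x ∧ x ≤ c then 1 else 0) +
        (if c - m ≤ x ∧ x ≤ c - m + j then 1 else 0)) := by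
  rw [zigzag, neg_neg, List.count_append, List.count_append, count_seg_one, count_seg_one,
    count_seg_neg_one]
  grind

lemma exists_zigzagLabel {ε : ℤ} (hε : ε = 1 ∨ ε = -1) (c : ℤ) {i m j : ℕ}
    (h : IsLongMid i m j) : ∃ (c' : ℤ) (m' i' j' : ℕ),
      (i' < m' ∧ j' < m' ∨ i' = m' ∧ j' = 0 ∨ i' = 0 ∧ j' = m') ∧
      ∀ x, (zigzag ε c i m j).count x = zigzagLabel c' m' i' j' x := by
  unfold IsLongMid at h
  unfold zigzagLabel
  rcases hε with rfl | rfl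
  · simp only [count_zigzag_one]
    rcases h with rfl | rfl | h
    · rcases le_or_gt j m with hjm | hjm
      · exact ⟨c, m, 0, j, by omega, by grind⟩
      · exact ⟨c + m - j, j, 0, m, by omega, by grind⟩
    · rcases le_or_gt i m with him | him
      · exact ⟨c, m, i, 0, by omega, by grind⟩
      · exact ⟨c, i, m, 0, by omega, by grind⟩
    · exact ⟨c, m, i, j, by omega, by grind⟩
  · simp only [count_zigzag_neg_one]
    rcases h with rfl | rfl | h
    · rcases le_or_gt j m with hjm | hjm
      · exact ⟨c - m, m, j, 0, by omega, by grind⟩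
      · exact ⟨c - m, j, m, 0, by omega, by grind⟩
    · rcases le_or_gt i m with him | him
      · exact ⟨c - m, m, 0, i, by omega, by grind⟩
      · exact ⟨c - i, i, 0, m, by omega, by grind⟩
    · exact ⟨c - m, m, j, i, by omega, by grind⟩

/-- Parameters `(i, j)` giving each label `zigzagLabel c m i j` once. -/
def IsLabelPair (m i j : ℕ) : Prop :=
  (i < m ∧ j < m ∧ (i + j + 1 = m → i = 0)) ∨ (i = m ∧ j = 0) ∨ (i = 0 ∧ j = m)

instance (m i j : ℕ) : Decidable (IsLabelPair m i j) := by
  unfold IsLabelPair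
  infer_instance

/-- The finite set of pairs described by `IsLabelPair`. -/
def labelPairs (m : ℕ) : Finset (ℕ × ℕ) :=
  (Finset.range (m + 1) ×ˢ Finset.range (m + 1)).filter fun q => IsLabelPair m q.1 q.2

lemma mem_labelPairs (m i j : ℕ) : (i, j) ∈ labelPairs m ↔ IsLabelPair m i j := by
  rw [labelPairs, Finset.mem_filter, Finset.mem_product, Finset.mem_range, Finset.mem_range]
  unfold IsLabelPair
  dsimp only
  omega

lemma card_labelPairs_zero : (labelPairs 0).card = 1 := by decide

lemma card_labelPairs_succ (m : ℕ) : (labelPairs (m + 1)).card = m ^ 2 + m + 3 := by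
  set A := (Finset.range m).image fun i => (i + 1, m - 1 - i) with hA
  have hAcard : A.card = m := by
    rw [hA, Finset.card_image_of_injective, Finset.card_range]
    intro i j h
    simpa using (Prod.ext_iff.1 h).1
  have hmemA : ∀ i j, (i, j) ∈ A ↔ i + j = m ∧ i ≠ 0 := by
    intro i j
    simp only [hA, Finset.mem_image, Finset.mem_range, Prod.mk.injEq]
    constructor
    · rintro ⟨k, hk, rfl, rfl⟩
      omega
    · intro h
      exact ⟨i - 1, by omega, by omega, by omega⟩
  have hsub : A ⊆ Finset.range (m + 1) ×ˢ Finset.range (m + 1) := by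
    rintro ⟨i, j⟩ h
    rw [hmemA] at h
    simp only [Finset.mem_product, Finset.mem_range]
    omega
  have heq : labelPairs (m + 1) = insert (m + 1, 0) (insert (0, m + 1)
      ((Finset.range (m + 1) ×ˢ Finset.range (m + 1)) \ A)) := by
    ext ⟨i, j⟩
    simp only [mem_labelPairs, Finset.mem_insert, Finset.mem_sdiff, hmemA, Finset.mem_product,
      Finset.mem_range, IsLabelPair, Prod.mk.injEq]
    omega
  rw [heq, Finset.card_insert_of_notMem, Finset.card_insert_of_notMem,
    Finset.card_sdiff_of_subset hsub, Finset.card_product, Finset.card_range, hAcard]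
  · have : (m + 1) * (m + 1) = m ^ 2 + m + 1 + m := by ring
    omega
  · simp
  · simp

/-- The parameters `⟨m, c, i, j⟩` of the nonzero labels of u.l.g.s. -/
def labelParams (n : ℕ) : Finset (Σ _ : ℕ, ℕ × ℕ × ℕ) :=
  (Finset.range n).sigma fun m => Finset.range (n - m) ×ˢ labelPairs m

lemma mem_labelParams (n m c i j : ℕ) :
    ⟨m, c, i, j⟩ ∈ labelParams n ↔ c + m < n ∧ IsLabelPair m i j := by
  simp only [labelParams, Finset.mem_sigma, Finset.mem_range, Finset.mem_product, mem_labelPairs]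
  constructor
  · rintro ⟨h1, h2, h3⟩
    exact ⟨by omega, h3⟩
  · rintro ⟨h1, h3⟩
    exact ⟨by omega, by omega, h3⟩

lemma sum_card_labelPairs (n : ℕ) :
    3 * ∑ m ∈ Finset.range (n + 1), (labelPairs m).card = n ^ 3 + 8 * n + 3 := by
  induction n with
  | zero => simp [card_labelPairs_zero]
  | succ n ih =>
    rw [Finset.sum_range_succ, mul_add, ih, card_labelPairs_succ]
    ring

lemma card_labelParams (n : ℕ) : (12 * ((labelParams n).card + 1) : ℤ) =
    n ^ 4 - 2 * n ^ 3 + 17 * n ^ 2 - 4 * n + 12 := by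
  have hcard : ∀ n, (labelParams n).card =
      ∑ m ∈ Finset.range n, (n - m) * (labelPairs m).card := fun n => by
    simp [labelParams, Finset.card_sigma]
  induction n with
  | zero => simp [hcard]
  | succ n ih =>
    have hstep : (labelParams (n + 1)).card =
        (labelParams n).card + ∑ m ∈ Finset.range (n + 1), (labelPairs m).card := by
      have h0 : ∑ m ∈ Finset.range n, (n - m) * (labelPairs m).card =
          ∑ m ∈ Finset.range (n + 1), (n - m) * (labelPairs m).card := by
        simp [Finset.sum_range_succ]
      rw [hcard, hcard, h0, ← Finset.sum_add_distrib]
      refine Finset.sum_congr rfl fun m hm => ?_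
      rw [Finset.mem_range] at hm
      rw [show n + 1 - m = n - m + 1 by omega]
      ring
    have hsum := sum_card_labelPairs n
    zify at hsum
    rw [hstep]
    push_cast
    linarith

/-- The label on `Fin n` with given parameters. -/
def labelOf (n : ℕ) (q : Σ _ : ℕ, ℕ × ℕ × ℕ) (x : Fin n) : ℕ :=
  zigzagLabel q.2.1 q.1 q.2.2.1 q.2.2.2 x

lemma IsLabelPair.left_le {m i j i' j' : ℕ} (h : IsLabelPair m i' j')
    (heq : ∀ y : ℕ, y ≤ m → zigzagLabel 0 m i j y = zigzagLabel 0 m i' j' y) : i' ≤ i := by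
  unfold zigzagLabel at heq
  unfold IsLabelPair at h
  by_contra! hlt
  have h1 := heq (i + 1)
  have h2 := heq i
  have h3 := heq (i' + 1)
  have h4 := heq i'
  have h5 := heq 0
  have h6 := heq m
  clear heq
  grind (splits := 30)

lemma IsLabelPair.zigzagLabel_ne_zero_iff {m i j : ℕ} (h : IsLabelPair m i j) (c x : ℤ) :
    zigzagLabel c m i j x ≠ 0 ↔ c ≤ x ∧ x ≤ c + m := by
  unfold zigzagLabel
  unfold IsLabelPair at h
  grind

lemma zigzagLabel_add (c : ℤ) (m i j : ℕ) (x : ℤ) :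
    zigzagLabel c m i j (c + x) = zigzagLabel 0 m i j x := by
  unfold zigzagLabel
  grind

lemma labelOf_injOn (n : ℕ) : Set.InjOn (labelOf n) (labelParams n) := by
  rintro ⟨m, c, i, j⟩ hq ⟨m', c', i', j'⟩ hq' h
  rw [Finset.mem_coe, mem_labelParams] at hq hq'
  obtain ⟨hn, hp⟩ := hq
  obtain ⟨hn', hp'⟩ := hq'
  have hx : ∀ x : ℕ, x < n → zigzagLabel c m i j x = zigzagLabel c' m' i' j' x :=
    fun x hx => congrFun h ⟨x, hx⟩
  have hsupp : ∀ x : ℕ, x < n → (c ≤ x ∧ x ≤ c + m ↔ c' ≤ x ∧ x ≤ c' + m') := by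
    intro x hxn
    have := hp.zigzagLabel_ne_zero_iff c x
    rw [hx x hxn, hp'.zigzagLabel_ne_zero_iff] at this
    omega
  have h1 := hsupp c
  have h2 := hsupp c'
  have h3 := hsupp (c + m)
  have h4 := hsupp (c' + m')
  obtain rfl : c = c' := by omega
  obtain rfl : m = m' := by omega
  have heq : ∀ y : ℕ, y ≤ m → zigzagLabel 0 m i j y = zigzagLabel 0 m i' j' y := by
    intro y hy
    rw [← zigzagLabel_add c, ← zigzagLabel_add c]
    exact_mod_cast hx (c + y) (by omega)
  obtain rfl : i = i' :=
    le_antisymm (hp.left_le fun y hy => (heq y hy).symm) (hp'.left_le heq)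
  obtain rfl : j = j' := by
    unfold zigzagLabel at heq
    unfold IsLabelPair at hp hp'
    have h1 := heq (m - j)
    have h2 := heq (m - j')
    have h3 := heq 0
    have h4 := heq m
    clear heq hx h hsupp
    grind (splits := 30)
  rfl

lemma exists_toIntWord {n : ℕ} {w : List ℤ} (hw : ∀ x ∈ w, 0 ≤ x ∧ x < n) :
    ∃ ω : List (Fin n), toIntWord ω = w := by
  induction w with
  | nil => exact ⟨[], rfl⟩
  | cons x w ih =>
    obtain ⟨ω, rfl⟩ := ih fun y hy => hw y (List.mem_cons_of_mem _ hy)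
    obtain ⟨hx0, hxn⟩ := hw x List.mem_cons_self
    refine ⟨⟨x.toNat, by omega⟩ :: ω, ?_⟩
    simp [toIntWord, hx0]

lemma count_toIntWord {n : ℕ} (ω : List (Fin n)) (x : Fin n) :
    (toIntWord ω).count ((x : ℕ) : ℤ) = ω.count x :=
  List.count_map_of_injective ω _ (natCast_val_injective n) x

lemma mem_toIntWord {n : ℕ} {ω : List (Fin n)} {x : ℤ} (h : x ∈ toIntWord ω) :
    0 ≤ x ∧ x < n := by
  obtain ⟨y, -, rfl⟩ := List.mem_map.1 h
  omega

lemma zigzagLabel_eq_of_add_one_eq {i j m : ℕ} (h : i + j + 1 = m) (c x : ℤ) :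
    zigzagLabel c m i j x = zigzagLabel c m 0 (m - 1) x := by
  unfold zigzagLabel
  grind

/-- The label of a nonempty u.l.g. is one of the labels `labelOf n q`. -/
lemma IsULGA.exists_labelOf {n : ℕ} {ω : List (Fin n)} (h : IsULGA n ω) (hne : ω ≠ []) :
    ∃ q ∈ labelParams n, ∀ x, ω.count x = labelOf n q x := by
  obtain ⟨ε, c, i, m, j, hε, hmid, hz⟩ := h.exists_zigzag hne
  obtain ⟨c', m', i', j', hp, hl⟩ := exists_zigzagLabel hε c hmid
  rw [← hz] at hl
  have hmem : ∀ x, zigzagLabel c' m' i' j' x ≠ 0 → 0 ≤ x ∧ x < n := by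
    intro x hx
    rw [← hl] at hx
    exact mem_toIntWord (List.count_pos_iff.1 (Nat.pos_of_ne_zero hx))
  have hc := hmem c' (by unfold zigzagLabel; grind)
  have hcm := hmem (c' + m') (by unfold zigzagLabel; grind)
  obtain ⟨c', rfl⟩ := Int.eq_ofNat_of_zero_le hc.1
  have hcount : ∀ x : Fin n, ω.count x = zigzagLabel c' m' i' j' x :=
    fun x => by rw [← count_toIntWord, hl]
  by_cases hlab : IsLabelPair m' i' j'
  · exact ⟨⟨m', c', i', j'⟩, (mem_labelParams ..).2 ⟨by omega, hlab⟩, hcount⟩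
  · have hlab' : i' + j' + 1 = m' := by
      unfold IsLabelPair at hlab
      omega
    refine ⟨⟨m', c', 0, m' - 1⟩, (mem_labelParams ..).2 ⟨by omega, ?_⟩, fun x => ?_⟩
    · unfold IsLabelPair
      omega
    · rw [hcount, zigzagLabel_eq_of_add_one_eq hlab', labelOf]

/-- Every label `labelOf n q` is the label of a u.l.g. -/
lemma exists_isULGA_labelOf {n : ℕ} {q : Σ _ : ℕ, ℕ × ℕ × ℕ} (hq : q ∈ labelParams n) :
    ∃ ω, IsULGA n ω ∧ ∀ x, ω.count x = labelOf n q x := by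
  obtain ⟨m, c, i, j⟩ := q
  rw [mem_labelParams] at hq
  obtain ⟨hn, hp⟩ := hq
  unfold IsLabelPair at hp
  have hcount : ∀ x, (zigzag 1 c i m j).count x = zigzagLabel c m i j x := by
    intro x
    rw [count_zigzag_one]
    unfold zigzagLabel
    grind
  have hrigid : IsRigid (zigzag 1 c i m j) := by
    simpa [zigzag] using isRigid_zigzag (c : ℤ) i m j (by omega)
  obtain ⟨ω, hω⟩ : ∃ ω : List (Fin n), toIntWord ω = zigzag 1 c i m j := by
    refine exists_toIntWord fun x hx => ?_
    have hpos := List.count_pos_iff.2 hx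
    rw [hcount] at hpos
    unfold zigzagLabel at hpos
    grind
  rw [← hω] at hrigid hcount
  exact ⟨ω, hrigid.isULGA, fun x => by rw [← count_toIntWord, hcount, labelOf]⟩

lemma labelOf_ne_zero {n : ℕ} {q : Σ _ : ℕ, ℕ × ℕ × ℕ} (hq : q ∈ labelParams n) :
    labelOf n q ≠ 0 := by
  obtain ⟨m, c, i, j⟩ := q
  rw [mem_labelParams] at hq
  intro h
  have hc := congrFun h ⟨c, by omega⟩
  simp only [labelOf, zigzagLabel, Pi.zero_apply] at hc
  grind

lemma exists_isULGA_count_iff (n : ℕ) (ι : Fin n → ℕ) :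
    (∃ ω : List (Fin n), IsULGA n ω ∧ ∀ i : Fin n, ω.count i = ι i) ↔
      ι ∈ insert 0 ((labelParams n).image (labelOf n)) := by
  rw [Finset.mem_insert, Finset.mem_image]
  constructor
  · rintro ⟨ω, hω, hι⟩
    by_cases hne : ω = []
    · subst hne
      exact Or.inl (funext fun i => by simp [← hι])
    · obtain ⟨q, hq, hl⟩ := hω.exists_labelOf hne
      exact Or.inr ⟨q, hq, funext fun i => by rw [← hι, hl]⟩
  · rintro (rfl | ⟨q, hq, rfl⟩)
    · exact ⟨[], IsRigid.isULGA IsRigid.nil, by simp⟩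
    · exact exists_isULGA_labelOf hq

lemma card_labels (n : ℕ) : Nat.card {ι : Fin n → ℕ //
    ∃ ω : List (Fin n), IsULGA n ω ∧ ∀ i : Fin n, ω.count i = ι i} =
      (labelParams n).card + 1 := by
  rw [Nat.subtype_card _ fun ι => (exists_isULGA_count_iff n ι).symm,
    Finset.card_insert_of_notMem, Finset.card_image_of_injOn (labelOf_injOn n)]
  rw [Finset.mem_image]
  rintro ⟨q, hq, h⟩
  exact labelOf_ne_zero hq h

end Helpers

theorem number_of_labels_of_ulgs_in_type_A (n : ℕ) (hn : 1 ≤ n) :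
    12 * (Nat.card {ι : Fin n → ℕ //
        ∃ ω : List (Fin n), IsULGA n ω ∧ ∀ i : Fin n, ω.count i = ι i} : ℤ) =
      (n : ℤ) ^ 4 - 2 * (n : ℤ) ^ 3 + 17 * (n : ℤ) ^ 2 - 4 * (n : ℤ) + 12 := by
  rw [card_labels]
  exact_mod_cast card_labelParams n
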